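/- Let A = (a_{i,j})_{0≤i,j≤d-1} ∈ ℤ^{d×d} be a reduced idealizing matrix. Then the number of vectors β ∈ ℤ^d such that the (d+1)×(d+1) matrix Ã(β), with top-left d×d block A, last column (β_0,…,β_{d-1},1)ᵀ, and bottom row (0,…,0,1), is a reduced idealizing matrix equals a_{d-1,d-1}^d. -/

import Mathlib

/-!
Write `n = a_{d-1,d-1}`, `L = A ℤ^d` and `s = σ(A e_{d-1})`. Comparing last coordinates in the only
new span condition shows that `Ã(β)` is reduced idealizing exactly when `β` lies in the box
`∏ [0, a_{i,i})` and `s - n β ∈ L` (`reducedIdealizing_extendMatrix_iff`).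

The span conditions on `A` force `a_{j,j}` to divide every entry of the columns `0, …, j`
(`diag_dvd`); in particular `A = n A'` and `s = n s'`, so the second condition says that
`β ∈ s' + A' ℤ^d`. Since `A` is upper triangular with positive diagonal, the box is a system of
representatives of `ℤ^d / L` (`exists_mulVec_mem_box`, `mulVec_eq_zero_of_abs_lt`). Hence the
admissible `β` are in bijection with `A' ℤ^d / n A' ℤ^d ≅ (ℤ/n)^d`.
-/

/-- The down-shift of a vector: `σ(v)_0 = 0` and `σ(v)_i = v_{i-1}` for `i ≥ 1`. -/
def shiftDown {m : ℕ} (v : Fin m → ℤ) : Fin m → ℤ :=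
  fun i => if (i : ℕ) = 0 then 0
    else v ⟨(i : ℕ) - 1, lt_of_le_of_lt (Nat.sub_le _ _) i.isLt⟩

/-- An integer matrix is idealizing if it is upper triangular, has nonzero determinant and
for each `0 ≤ j ≤ m-2` the shifted `j`-th column lies in the subgroup generated by
columns `0,…,j+1`. -/
def Idealizing {m : ℕ} (B : Matrix (Fin m) (Fin m) ℤ) : Prop :=
  (∀ i j : Fin m, (j : ℕ) < (i : ℕ) → B i j = 0) ∧ B.det ≠ 0 ∧
    ∀ j : Fin m, (j : ℕ) + 2 ≤ m →
      shiftDown (fun i => B i j) ∈ Submodule.span ℤ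
        {w : Fin m → ℤ | ∃ l : Fin m, (l : ℕ) ≤ (j : ℕ) + 1 ∧ w = fun i => B i l}

/-- An idealizing matrix is reduced if its diagonal entries are positive and each entry above
the diagonal satisfies `0 ≤ b_{i,j} < b_{i,i}`. -/
def ReducedIdealizing {m : ℕ} (B : Matrix (Fin m) (Fin m) ℤ) : Prop :=
  Idealizing B ∧ (∀ i, 0 < B i i) ∧
    ∀ i j : Fin m, (i : ℕ) < (j : ℕ) → 0 ≤ B i j ∧ B i j < B i i

/-- The `(d+1)×(d+1)` matrix `Ã(β)` with top-left block `A`, last column `(β,1)ᵀ` and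
bottom row `(0,…,0,1)`. -/
def extendMatrix {d : ℕ} (A : Matrix (Fin d) (Fin d) ℤ) (β : Fin d → ℤ) :
    Matrix (Fin (d + 1)) (Fin (d + 1)) ℤ :=
  fun i j =>
    if hi : (i : ℕ) < d then
      (if hj : (j : ℕ) < d then A ⟨i, hi⟩ ⟨j, hj⟩ else β ⟨i, hi⟩)
    else if (j : ℕ) < d then 0 else 1

open Matrix

theorem mem_span_cols_iff {m : ℕ} (B : Matrix (Fin m) (Fin m) ℤ) (k : ℕ) (x : Fin m → ℤ) :
    x ∈ Submodule.span ℤ {w : Fin m → ℤ | ∃ l : Fin m, (l : ℕ) ≤ k ∧ w = fun i => B i l} ↔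
      ∃ c : Fin m → ℤ, (∀ l : Fin m, k < (l : ℕ) → c l = 0) ∧ x = B *ᵥ c := by
  constructor
  · intro h
    induction h using Submodule.span_induction with
    | mem x hx =>
      obtain ⟨l, hl, rfl⟩ := hx
      refine ⟨Pi.single l 1, fun l' hl' => ?_, ?_⟩
      · rw [Pi.single_eq_of_ne]
        rintro rfl
        omega
      · ext i
        simp
    | zero => exact ⟨0, by simp, by simp⟩
    | add x y _ _ hx hy =>
      obtain ⟨c, hc, rfl⟩ := hx
      obtain ⟨c', hc', rfl⟩ := hy
      exact ⟨c + c', fun l hl => by simp [hc l hl, hc' l hl], by rw [mulVec_add]⟩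
    | smul a x _ hx =>
      obtain ⟨c, hc, rfl⟩ := hx
      exact ⟨a • c, fun l hl => by simp [hc l hl], by rw [mulVec_smul]⟩
  · rintro ⟨c, hc, rfl⟩
    have : B *ᵥ c = ∑ l, c l • (fun i => B i l) := by
      ext i
      simp [mulVec, dotProduct, mul_comm]
    rw [this]
    refine Submodule.sum_mem _ fun l _ => ?_
    by_cases hl : (l : ℕ) ≤ k
    · exact Submodule.smul_mem _ _ (Submodule.subset_span ⟨l, hl, rfl⟩)
    · rw [hc l (by omega), zero_smul]
      exact Submodule.zero_mem _

/-- In an idealizing matrix with positive diagonal, the `j`-th diagonal entry divides all entries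
of the columns `0, …, j`. If `σ(b_j) = ∑_{l ≤ j+1} k_l b_l`, comparing the entries in row `j + 1`
gives `b_{j,j} = k_{j+1} b_{j+1,j+1}`, and `b_{j,j}` divides the vector `k_{j+1} b_{j+1}`. -/
theorem diag_dvd {m : ℕ} {B : Matrix (Fin m) (Fin m) ℤ} (hB : Idealizing B)
    (hpos : ∀ i, 0 < B i i) (j : ℕ) (hj : j < m) (l : Fin m) (hl : (l : ℕ) ≤ j) (i : Fin m) :
    B ⟨j, hj⟩ ⟨j, hj⟩ ∣ B i l := by
  induction j generalizing l i with
  | zero =>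
    obtain rfl : l = ⟨0, hj⟩ := Fin.ext (by simpa using hl)
    by_cases hi : i = ⟨0, hj⟩
    · rw [hi]
    · rw [hB.1 i _ (by simp only [Fin.ext_iff] at hi ⊢; omega)]
      exact dvd_zero _
  | succ j ih =>
    have hj' : j < m := by omega
    obtain ⟨c, hc, hx⟩ := (mem_span_cols_iff B _ _).1 (hB.2.2 ⟨j, hj'⟩ (by simp; omega))
    simp only at hc
    -- Isolate the column `j + 1` in each row of the span relation.
    have hrow : ∀ i, shiftDown (fun i => B i ⟨j, hj'⟩) i =
        B i ⟨j + 1, hj⟩ * c ⟨j + 1, hj⟩ +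
          ∑ l ∈ Finset.univ.erase (⟨j + 1, hj⟩ : Fin m), B i l * c l := by
      intro i
      rw [hx, mulVec, dotProduct, ← Finset.add_sum_erase _ _ (Finset.mem_univ ⟨j + 1, hj⟩)]
    have hdiag : B ⟨j, hj'⟩ ⟨j, hj'⟩ = B ⟨j + 1, hj⟩ ⟨j + 1, hj⟩ * c ⟨j + 1, hj⟩ := by
      have h := hrow ⟨j + 1, hj⟩
      rw [Finset.sum_eq_zero, add_zero] at h
      · simpa [shiftDown] using h
      · intro l hl
        have hne : (l : ℕ) ≠ j + 1 := fun h => (Finset.ne_of_mem_erase hl) (Fin.ext h)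
        rcases lt_or_gt_of_ne hne with h | h
        · rw [hB.1 _ _ (by simpa using h), zero_mul]
        · rw [hc l h, mul_zero]
    rcases Nat.lt_or_ge (l : ℕ) (j + 1) with h | h
    · exact (Dvd.intro _ hdiag.symm).trans (ih hj' l (by omega) i)
    · obtain rfl : l = ⟨j + 1, hj⟩ := Fin.ext (by simp; omega)
      have hc0 : c ⟨j + 1, hj⟩ ≠ 0 := by
        intro h0
        have := hpos ⟨j, hj'⟩
        rw [hdiag, h0, mul_zero] at this
        exact lt_irrefl _ this
      have h1 : B ⟨j, hj'⟩ ⟨j, hj'⟩ ∣ shiftDown (fun i => B i ⟨j, hj'⟩) i := by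
        unfold shiftDown
        split_ifs
        · exact dvd_zero _
        · exact ih hj' _ le_rfl _
      have h2 : B ⟨j, hj'⟩ ⟨j, hj'⟩ ∣
          ∑ l ∈ Finset.univ.erase (⟨j + 1, hj⟩ : Fin m), B i l * c l := by
        refine Finset.dvd_sum fun l hl => ?_
        have hne : (l : ℕ) ≠ j + 1 := fun h => (Finset.ne_of_mem_erase hl) (Fin.ext h)
        rcases lt_or_gt_of_ne hne with h | h
        · exact (ih hj' l (by omega) i).mul_right _
        · rw [hc l h, mul_zero]
          exact dvd_zero _
      rw [hrow i, dvd_add_left h2, hdiag] at h1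
      exact (mul_dvd_mul_iff_right hc0).1 h1

/-- Back substitution: every vector can be moved into the box `∏ [0, b_{i,i})` by adding an
element of the column lattice of `B`. -/
theorem exists_mulVec_mem_box {m : ℕ} {B : Matrix (Fin m) (Fin m) ℤ}
    (htri : ∀ i j : Fin m, (j : ℕ) < (i : ℕ) → B i j = 0) (hpos : ∀ i, 0 < B i i)
    (v : Fin m → ℤ) :
    ∃ z : Fin m → ℤ, ∀ i, 0 ≤ (v + B *ᵥ z) i ∧ (v + B *ᵥ z) i < B i i := by
  suffices h : ∀ k ≤ m, ∃ z : Fin m → ℤ, ∀ i : Fin m, m ≤ i + k →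
      0 ≤ (v + B *ᵥ z) i ∧ (v + B *ᵥ z) i < B i i by
    obtain ⟨z, hz⟩ := h m le_rfl
    exact ⟨z, fun i => hz i (by omega)⟩
  intro k
  induction k with
  | zero => exact fun _ => ⟨0, fun i hi => by omega⟩
  | succ k ih =>
    intro hk
    obtain ⟨z, hz⟩ := ih (by omega)
    let i₀ : Fin m := ⟨m - (k + 1), by omega⟩
    refine ⟨z + Pi.single i₀ (-((v + B *ᵥ z) i₀ / B i₀ i₀)), fun i hi => ?_⟩
    have key : (v + B *ᵥ (z + Pi.single i₀ (-((v + B *ᵥ z) i₀ / B i₀ i₀)))) i =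
        (v + B *ᵥ z) i - B i i₀ * ((v + B *ᵥ z) i₀ / B i₀ i₀) := by
      rw [mulVec_add, ← add_assoc, Pi.add_apply, sub_eq_add_neg, ← mul_neg]
      simp
    rw [key]
    by_cases h : i = i₀
    · subst h
      rw [← Int.emod_def]
      exact ⟨Int.emod_nonneg _ (hpos _).ne', Int.emod_lt_of_pos _ (hpos _)⟩
    · have hlt : (i₀ : ℕ) < i := by
        have : (i : ℕ) ≠ m - (k + 1) := fun h' => h (Fin.ext h')
        change m - (k + 1) < (i : ℕ)
        omega
      rw [htri i i₀ hlt, zero_mul, sub_zero]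
      exact hz i (by change m - (k + 1) < (i : ℕ) at hlt; omega)

theorem mulVec_eq_zero_of_abs_lt {m : ℕ} {B : Matrix (Fin m) (Fin m) ℤ}
    (htri : ∀ i j : Fin m, (j : ℕ) < (i : ℕ) → B i j = 0)
    (z : Fin m → ℤ) (hz : ∀ i, |(B *ᵥ z) i| < B i i) : z = 0 := by
  suffices h : ∀ k ≤ m, ∀ i : Fin m, m ≤ i + k → z i = 0 by
    ext i
    exact h m le_rfl i (by omega)
  intro k
  induction k with
  | zero => exact fun _ i hi => by omega
  | succ k ih =>
    intro hk i hi
    have hsum : (B *ᵥ z) i = B i i * z i := by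
      rw [mulVec, dotProduct]
      refine Finset.sum_eq_single i (fun j _ hj => ?_) (by simp)
      have hj' : (j : ℕ) ≠ i := fun h => hj (Fin.ext h)
      rcases lt_or_gt_of_ne hj' with h | h
      · rw [htri _ _ h, zero_mul]
      · rw [ih (by omega) j (by omega), mul_zero]
    have := hz i
    rw [hsum] at this
    have h0 := Int.eq_zero_of_abs_lt_dvd (Dvd.intro _ rfl) this
    have hpos : 0 < B i i := (abs_nonneg _).trans_lt this
    exact (mul_eq_zero.1 h0).resolve_left hpos.ne'

section Extend

variable {d : ℕ} (A : Matrix (Fin d) (Fin d) ℤ) (β : Fin d → ℤ)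

@[simp] theorem extendMatrix_castSucc_castSucc (i j : Fin d) :
    extendMatrix A β i.castSucc j.castSucc = A i j := by
  simp [extendMatrix]

@[simp] theorem extendMatrix_castSucc_last (i : Fin d) :
    extendMatrix A β i.castSucc (Fin.last d) = β i := by
  simp [extendMatrix]

@[simp] theorem extendMatrix_last_castSucc (j : Fin d) :
    extendMatrix A β (Fin.last d) j.castSucc = 0 := by
  simp [extendMatrix]

@[simp] theorem extendMatrix_last_last :
    extendMatrix A β (Fin.last d) (Fin.last d) = 1 := by
  simp [extendMatrix]

theorem extendMatrix_mulVec_castSucc (c : Fin (d + 1) → ℤ) (i : Fin d) :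
    (extendMatrix A β *ᵥ c) i.castSucc =
      (A *ᵥ fun l => c l.castSucc) i + β i * c (Fin.last d) := by
  simp [mulVec, dotProduct, Fin.sum_univ_castSucc]

theorem extendMatrix_mulVec_last (c : Fin (d + 1) → ℤ) :
    (extendMatrix A β *ᵥ c) (Fin.last d) = c (Fin.last d) := by
  simp [mulVec, dotProduct, Fin.sum_univ_castSucc]

theorem shiftDown_castSucc (v : Fin (d + 1) → ℤ) (i : Fin d) :
    shiftDown v i.castSucc = shiftDown (fun l : Fin d => v l.castSucc) i := by
  simp [shiftDown]

theorem shiftDown_last {e : ℕ} (v : Fin (e + 2) → ℤ) :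
    shiftDown v (Fin.last (e + 1)) = v (Fin.last e).castSucc := by
  rw [shiftDown, if_neg (by simp)]
  rfl

end Extend

/-- The conditions on `Ã(β)` reduce to bounds on `β` and one lattice membership: in the span
condition for the column of `A` with index `e = d - 1`, the coefficient of the last column of
`Ã(β)` is forced to be `a_{e,e}`. -/
theorem reducedIdealizing_extendMatrix_iff {e : ℕ} {A : Matrix (Fin (e + 1)) (Fin (e + 1)) ℤ}
    (hA : ReducedIdealizing A) (β : Fin (e + 1) → ℤ) :
    ReducedIdealizing (extendMatrix A β) ↔
      (∀ i, 0 ≤ β i ∧ β i < A i i) ∧ ∃ z : Fin (e + 1) → ℤ, ∀ i,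
        shiftDown (fun i => A i (Fin.last e)) i = (A *ᵥ z) i + β i * A (Fin.last e) (Fin.last e) := by
  obtain ⟨⟨htri, hdet, hspan⟩, hpos, hred⟩ := hA
  constructor
  · rintro ⟨⟨-, -, hspan'⟩, -, hred'⟩
    refine ⟨fun i => by simpa using hred' i.castSucc (Fin.last _) (by simp; omega), ?_⟩
    obtain ⟨c, -, hx⟩ := (mem_span_cols_iff _ _ _).1 (hspan' (Fin.last e).castSucc (by simp))
    have hl := congrFun hx (Fin.last _)
    rw [extendMatrix_mulVec_last] at hl
    have hl' : A (Fin.last e) (Fin.last e) = c (Fin.last _) := by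
      rw [← hl, shiftDown_last, extendMatrix_castSucc_castSucc]
    refine ⟨fun l => c l.castSucc, fun i => ?_⟩
    have hi := congrFun hx i.castSucc
    rw [extendMatrix_mulVec_castSucc, shiftDown_castSucc, ← hl'] at hi
    simpa using hi
  · rintro ⟨hbox, z, hz⟩
    have htri' : ∀ i j : Fin (e + 1 + 1), (j : ℕ) < (i : ℕ) → extendMatrix A β i j = 0 := by
      intro i j hij
      induction j using Fin.lastCases with
      | last => have := i.isLt; simp at hij; omega
      | cast j =>
        induction i using Fin.lastCases with
        | last => simp
        | cast i => simpa using htri i j (by simpa using hij)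
    have hpos' : ∀ i, 0 < extendMatrix A β i i := by
      intro i
      induction i using Fin.lastCases with
      | last => simp
      | cast i => simpa using hpos i
    refine ⟨⟨htri', ?_, ?_⟩, hpos', ?_⟩
    · have : (extendMatrix A β).BlockTriangular id := fun i j hij => htri' i j hij
      rw [det_of_isUpperTriangular this]
      exact (Finset.prod_pos fun i _ => hpos' i).ne'
    · intro j hj
      rw [mem_span_cols_iff]
      induction j using Fin.lastCases with
      | last => simp at hj
      | cast j =>
        by_cases hje : j = Fin.last e
        · subst hje
          refine ⟨Fin.snoc z (A (Fin.last e) (Fin.last e)), fun l hl => ?_, ?_⟩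
          · have := l.isLt; simp at hl; omega
          · ext i
            induction i using Fin.lastCases with
            | last =>
              rw [extendMatrix_mulVec_last, Fin.snoc_last, shiftDown_last,
                extendMatrix_castSucc_castSucc]
            | cast i =>
              rw [extendMatrix_mulVec_castSucc, shiftDown_castSucc]
              simpa using hz i
        · have hlt : (j : ℕ) < e := Fin.val_lt_last hje
          obtain ⟨c, hc, hx⟩ := (mem_span_cols_iff _ _ _).1 (hspan j (by omega))
          refine ⟨Fin.snoc c 0, fun l hl => ?_, ?_⟩
          · induction l using Fin.lastCases with
            | last => simp
            | cast l => simpa using hc l (by simpa using hl)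
          · ext i
            induction i using Fin.lastCases with
            | last =>
              rw [extendMatrix_mulVec_last, Fin.snoc_last, shiftDown_last,
                extendMatrix_castSucc_castSucc]
              exact htri (Fin.last e) j (by simpa using hlt)
            | cast i =>
              rw [extendMatrix_mulVec_castSucc, shiftDown_castSucc]
              simpa using congrFun hx i
    · intro i j hij
      induction i using Fin.lastCases with
      | last => have := j.isLt; simp at hij; omega
      | cast i =>
        induction j using Fin.lastCases with
        | last => simpa using hbox i
        | cast j => simpa using hred i j (by simpa using hij)

/-- Lemma 3.1: for a reduced idealizing `d×d` matrix `A`, the number of `β ∈ ℤ^d` such that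
`Ã(β)` is a reduced idealizing matrix equals `a_{d-1,d-1}^d`. -/
theorem card_extensions_of_reducedIdealizing {d : ℕ} (hd : 0 < d)
    (A : Matrix (Fin d) (Fin d) ℤ) (hA : ReducedIdealizing A) :
    (Nat.card {β : Fin d → ℤ // ReducedIdealizing (extendMatrix A β)} : ℤ) =
      (A ⟨d - 1, Nat.sub_lt hd one_pos⟩ ⟨d - 1, Nat.sub_lt hd one_pos⟩) ^ d := by
  obtain ⟨e, rfl⟩ : ∃ e, d = e + 1 := ⟨d - 1, by omega⟩
  change _ = A (Fin.last e) (Fin.last e) ^ (e + 1)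
  have htri := hA.1.1
  have hpos := hA.2.1
  obtain ⟨n, hn⟩ : ∃ n : ℕ, A (Fin.last e) (Fin.last e) = n :=
    ⟨_, (Int.toNat_of_nonneg (hpos _).le).symm⟩
  have hn0 : (0 : ℤ) < n := hn ▸ hpos _
  have : NeZero n := ⟨by rintro rfl; simp at hn0⟩
  have hdvd : ∀ i j, (n : ℤ) ∣ A i j := fun i j =>
    hn ▸ diag_dvd hA.1 hpos e (Nat.lt_succ_self e) j (by omega) i
  choose A' hA' using hdvd
  have hAmul : ∀ z i, (A *ᵥ z) i = n * ((Matrix.of A') *ᵥ z) i := by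
    intro z i
    simp [mulVec, dotProduct, hA', Finset.mul_sum, mul_assoc]
  have hs : ∀ i, ∃ s' : ℤ, shiftDown (fun i => A i (Fin.last e)) i = n * s' := by
    intro i
    unfold shiftDown
    split_ifs
    · exact ⟨0, by simp⟩
    · exact ⟨_, hA' _ _⟩
  choose s' hs' using hs
  -- After cancelling `n`, the admissible `β` form the part of a translate of `A' ℤ^d` in the box.
  have hiff : ∀ β, ReducedIdealizing (extendMatrix A β) ↔
      (∀ i, 0 ≤ β i ∧ β i < A i i) ∧ ∃ x, β = s' + Matrix.of A' *ᵥ x := by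
    intro β
    rw [reducedIdealizing_extendMatrix_iff hA]
    refine and_congr_right fun _ => ⟨?_, ?_⟩
    · rintro ⟨z, hz⟩
      refine ⟨-z, funext fun i => ?_⟩
      have := hz i
      rw [hs', hAmul, hn] at this
      rw [mulVec_neg, Pi.add_apply, Pi.neg_apply]
      apply mul_left_cancel₀ hn0.ne'
      linarith
    · rintro ⟨x, rfl⟩
      refine ⟨-x, fun i => ?_⟩
      rw [hs', hAmul, hn, mulVec_neg, Pi.add_apply, Pi.neg_apply]
      ring
  choose! x hx using fun β h => ((hiff β).1 h).2
  have hbij : Function.Bijective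
      (fun (β : {β // ReducedIdealizing (extendMatrix A β)}) (i : Fin (e + 1)) =>
        ((x β.1 i : ℤ) : ZMod n)) := by
    constructor
    · rintro ⟨β, hβ⟩ ⟨γ, hγ⟩ h
      have h' : ∀ i, ∃ w : ℤ, x γ i - x β i = n * w := fun i =>
        (ZMod.intCast_eq_intCast_iff_dvd_sub _ _ _).1 (congrFun h i)
      choose w hw using h'
      have hAw : A *ᵥ w = γ - β := by
        have h1 : x γ - x β = (n : ℤ) • w := funext hw
        rw [hx γ hγ, hx β hβ, add_sub_add_left_eq_sub, ← mulVec_sub, h1, mulVec_smul]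
        ext i
        simp [hAmul]
      have hw0 : w = 0 := by
        apply mulVec_eq_zero_of_abs_lt htri
        intro i
        have h1 := ((hiff β).1 hβ).1 i
        have h2 := ((hiff γ).1 hγ).1 i
        rw [hAw, Pi.sub_apply, abs_lt]
        constructor <;> linarith
      rw [hw0, mulVec_zero] at hAw
      exact Subtype.ext (sub_eq_zero.1 hAw.symm).symm
    · intro y
      choose y' hy' using fun i => ZMod.intCast_surjective (y i)
      obtain ⟨z, hz⟩ := exists_mulVec_mem_box htri hpos (s' + Matrix.of A' *ᵥ y')
      have hβ : s' + Matrix.of A' *ᵥ y' + A *ᵥ z = s' + Matrix.of A' *ᵥ (y' + (n : ℤ) • z) := by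
        rw [mulVec_add, add_assoc, mulVec_smul]
        congr 2
        ext i
        simp [hAmul]
      have hR := (hiff _).2 ⟨hz, _, hβ⟩
      refine ⟨⟨_, hR⟩, funext fun i => ?_⟩
      -- `A'` is injective because `A = n A'` is, so the chosen preimage is `y' + n z`.
      have hinj : x (s' + Matrix.of A' *ᵥ y' + A *ᵥ z) - (y' + (n : ℤ) • z) = 0 := by
        apply mulVec_eq_zero_of_abs_lt htri
        intro i
        have h1 := hx _ hR
        have h2 := add_left_cancel (h1.symm.trans hβ)
        rw [hAmul, mulVec_sub, h2]
        simpa using hpos i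
      have := congrFun (sub_eq_zero.1 hinj) i
      simp only [this]
      simp [hy']
  rw [Nat.card_eq_of_bijective _ hbij, hn]
  simp [Nat.card_eq_fintype_card, ZMod.card]
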